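/- Intrinsic S¹-linking is inherited from minors: if a simple graph H is a minor of a simple graph G and H is intrinsically S¹-linked, then G is intrinsically S¹-linked. -/

import Mathlib

/-!
For distinct points of the circle the cross ratio `(a, b; c, d)` is a nonzero real number, and `a`,
`b` lie in different components of `S¹ \ {c, d}` exactly when it is negative: as `a` varies it is a
homeomorphism from `S¹ \ {d}` onto `ℝ`, sending `c` to `0` and `b` to `1`. Since
`(a, b; c, d) = (c, d; a, b)`, linking of two pairs of points is a symmetric relation.

Given an `S¹`-embedding of `G`, choose a representative in each branch set. Some two disjoint edges
`hh'`, `kk'` of `H` are then linked. A walk in the branch sets of `h` and `h'` joins the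
representatives of `h` and `h'`, so one of its edges is already linked with the representatives of
`k` and `k'`. By symmetry the roles can be exchanged, and a walk in the branch sets of `k` and `k'`
gives the second edge.
-/

/-- `f a` and `f b` lie in different connected components of `S¹ \ {f c, f d}`. -/
def NonSplitLink {V : Type*} (f : V → Circle) (a b c d : V) : Prop :=
  connectedComponentIn ({f c, f d}ᶜ : Set Circle) (f a) ≠
    connectedComponentIn ({f c, f d}ᶜ : Set Circle) (f b)

/-- A graph is intrinsically S¹-linked if for every S¹-embedding (injective map of its
vertices to the circle) there is a pair of disjoint edges forming a non-split link. -/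
def IntrinsicallyS1Linked {V : Type*} (G : SimpleGraph V) : Prop :=
  ∀ f : V → Circle, Function.Injective f →
    ∃ a b c d : V, G.Adj a b ∧ G.Adj c d ∧
      ({a, b} : Set V) ∩ ({c, d} : Set V) = ∅ ∧
      NonSplitLink f a b c d

/-- `H` is a minor of `G`: there are pairwise disjoint nonempty branch sets in `G`, one for
each vertex of `H`, each inducing a connected subgraph, such that every edge of `H` is
realized by an edge of `G` between the corresponding branch sets. -/
def IsMinor {W V : Type*} (H : SimpleGraph W) (G : SimpleGraph V) : Prop :=
  ∃ B : W → Set V,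
    (∀ h, (B h).Nonempty) ∧
    (Pairwise fun h h' => Disjoint (B h) (B h')) ∧
    (∀ h, (G.induce (B h)).Connected) ∧
    (∀ h h', H.Adj h h' → ∃ u ∈ B h, ∃ u' ∈ B h', G.Adj u u')

section CrossRatio

variable {K : Type*} [Field K]

/-- The cross ratio `(a, b; c, d)` of four elements of a field, with the pairs ordered so that, on a
circle, it is negative exactly when `a, b` separate `c, d`. Its value is `0` if `a = d` or
`b = c`. -/
def crossRatio (a b c d : K) : K :=
  (a - c) * (b - d) / ((a - d) * (b - c))

lemma crossRatio_swap (a b c d : K) : crossRatio a b c d = crossRatio c d a b := by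
  unfold crossRatio
  congr 1 <;> ring

lemma crossRatio_self_left {a c d : K} (hac : a ≠ c) (had : a ≠ d) : crossRatio a a c d = 1 := by
  have := sub_ne_zero.2 hac
  have := sub_ne_zero.2 had
  unfold crossRatio
  field_simp

lemma crossRatio_ne_zero {a b c d : K} :
    crossRatio a b c d ≠ 0 ↔ (a ≠ c ∧ b ≠ d) ∧ a ≠ d ∧ b ≠ c := by
  simp only [crossRatio, ne_eq, div_eq_zero_iff, mul_eq_zero, sub_eq_zero, not_or]

lemma crossRatio_left_injOn {b c d : K} (hbc : b ≠ c) (hbd : b ≠ d) (hcd : c ≠ d) :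
    Set.InjOn (fun x => crossRatio x b c d) {d}ᶜ := by
  intro x hx y hy hxy
  have := sub_ne_zero.2 hbc
  have := sub_ne_zero.2 hbd
  have := sub_ne_zero.2 hx
  have := sub_ne_zero.2 hy
  simp only [crossRatio] at hxy
  field_simp at hxy
  have h : (x - y) * (c - d) = 0 := by linear_combination hxy
  exact sub_eq_zero.1 ((mul_eq_zero.1 h).resolve_right (sub_ne_zero.2 hcd))

lemma mul_sub_mul_div_sub_ne {b c d k t : K} (hbd : b ≠ d) (hcd : c ≠ d)
    (hk : k * (b - c) = b - d) (htk : t ≠ k) : (t * d - k * c) / (t - k) ≠ d := by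
  have hk0 : k ≠ 0 := left_ne_zero_of_mul (hk ▸ sub_ne_zero.2 hbd)
  rw [ne_eq, div_eq_iff (sub_ne_zero.2 htk)]
  intro h
  exact hcd (mul_left_cancel₀ hk0 (by linear_combination -h))

lemma crossRatio_mul_sub_mul_div_sub {b c d k t : K} (hbc : b ≠ c) (hbd : b ≠ d) (hcd : c ≠ d)
    (hk : k * (b - c) = b - d) (htk : t ≠ k) :
    crossRatio ((t * d - k * c) / (t - k)) b c d = t := by
  have htk' : t - k ≠ 0 := sub_ne_zero.2 htk
  have hden := mul_ne_zero (sub_ne_zero.2 (mul_sub_mul_div_sub_ne hbd hcd hk htk))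
    (sub_ne_zero.2 hbc)
  rw [crossRatio, div_eq_iff hden, ← hk]
  field_simp
  ring

end CrossRatio

section Circle

open ComplexConjugate

lemma circle_coe_ne_coe {x y : Circle} : (x : ℂ) ≠ y ↔ x ≠ y :=
  Circle.coe_injective.ne_iff

lemma conj_coe_sub_coe (x y : Circle) : conj ((x : ℂ) - y) = -(x - y) / (x * y) := by
  rw [map_sub, ← Circle.coe_inv_eq_conj, ← Circle.coe_inv_eq_conj, Circle.coe_inv,
    Circle.coe_inv, inv_sub_inv x.coe_ne_zero y.coe_ne_zero, neg_sub]

lemma conj_crossRatio_coe (a b c d : Circle) :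
    conj (crossRatio (a : ℂ) b c d) = crossRatio (a : ℂ) b c d := by
  have habcd : (a * b * c * d : ℂ) ≠ 0 := by simp
  simp only [crossRatio, map_div₀, map_mul, conj_coe_sub_coe]
  rw [← mul_div_mul_right _ _ habcd]
  field_simp

/-- The cross ratio of four points of the unit circle, as a real number; taking the real part
loses nothing by `coe_circleCrossRatio`. -/
noncomputable def circleCrossRatio (a b c d : Circle) : ℝ :=
  (crossRatio (a : ℂ) b c d).re

lemma coe_circleCrossRatio (a b c d : Circle) :
    (circleCrossRatio a b c d : ℂ) = crossRatio (a : ℂ) b c d :=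
  Complex.conj_eq_iff_re.1 (conj_crossRatio_coe a b c d)

lemma circleCrossRatio_swap (a b c d : Circle) :
    circleCrossRatio a b c d = circleCrossRatio c d a b :=
  congrArg Complex.re (crossRatio_swap _ _ _ _)

lemma circleCrossRatio_self_left {a c d : Circle} (hac : a ≠ c) (had : a ≠ d) :
    circleCrossRatio a a c d = 1 := by
  rw [circleCrossRatio,
    crossRatio_self_left (circle_coe_ne_coe.2 hac) (circle_coe_ne_coe.2 had), Complex.one_re]

lemma circleCrossRatio_ne_zero {a b c d : Circle} :
    circleCrossRatio a b c d ≠ 0 ↔ (a ≠ c ∧ b ≠ d) ∧ a ≠ d ∧ b ≠ c := by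
  rw [← Complex.ofReal_ne_zero, coe_circleCrossRatio, crossRatio_ne_zero]
  simp only [circle_coe_ne_coe]

lemma circleCrossRatio_left_injOn {b c d : Circle} (hbc : b ≠ c) (hbd : b ≠ d) (hcd : c ≠ d) :
    Set.InjOn (fun x => circleCrossRatio x b c d) {d}ᶜ := by
  intro x hx y hy hxy
  refine Circle.coe_injective <| crossRatio_left_injOn (circle_coe_ne_coe.2 hbc)
    (circle_coe_ne_coe.2 hbd) (circle_coe_ne_coe.2 hcd) (circle_coe_ne_coe.2 hx)
    (circle_coe_ne_coe.2 hy) ?_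
  simpa only [coe_circleCrossRatio] using congrArg Complex.ofReal hxy

lemma continuousOn_circleCrossRatio_left {b c d : Circle} (hbc : b ≠ c) :
    ContinuousOn (fun x => circleCrossRatio x b c d) {d}ᶜ := by
  have hden (x : Circle) (hx : x ∈ ({d}ᶜ : Set Circle)) : ((x : ℂ) - d) * (b - c) ≠ 0 :=
    mul_ne_zero (sub_ne_zero.2 (circle_coe_ne_coe.2 hx))
      (sub_ne_zero.2 (circle_coe_ne_coe.2 hbc))
  unfold circleCrossRatio crossRatio
  fun_prop (disch := exact hden)

lemma exists_continuous_circleCrossRatio_eq {b c d : Circle} (hbc : b ≠ c) (hbd : b ≠ d)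
    (hcd : c ≠ d) :
    ∃ p : ℝ → Circle, Continuous p ∧ ∀ t, p t ≠ d ∧ circleCrossRatio (p t) b c d = t := by
  have hbc' : (b : ℂ) ≠ c := circle_coe_ne_coe.2 hbc
  have hbd' : (b : ℂ) ≠ d := circle_coe_ne_coe.2 hbd
  have hcd' : (c : ℂ) ≠ d := circle_coe_ne_coe.2 hcd
  have hbc0 : (b - c : ℂ) ≠ 0 := sub_ne_zero.2 hbc'
  obtain ⟨k, hk⟩ : ∃ k : ℂ, k * (b - c) = b - d := ⟨_, div_mul_cancel₀ _ hbc0⟩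
  have hconj : d * conj k = k * c := by
    have hk_conj := congrArg conj hk
    rw [map_mul, conj_coe_sub_coe, conj_coe_sub_coe] at hk_conj
    field_simp at hk_conj
    refine mul_right_cancel₀ hbc0 ?_
    linear_combination -hk_conj - c * hk
  have hk_ne (t : ℝ) : (t : ℂ) ≠ k := by
    rintro rfl
    rw [Complex.conj_ofReal, mul_comm] at hconj
    have ht : (t : ℂ) ≠ 0 := left_ne_zero_of_mul (hk ▸ sub_ne_zero.2 hbd')
    exact hcd' (mul_left_cancel₀ ht hconj).symm
  -- The solution of `(x, b; c, d) = t` over `ℂ` is unimodular because `k * c = d * conj k`.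
  let p (t : ℝ) : Circle := d * Circle.ofConjDivSelf (t - k) (sub_ne_zero.2 (hk_ne t))
  have coe_p (t : ℝ) : (p t : ℂ) = (t * d - k * c) / (t - k) := by
    rw [Circle.coe_mul, Circle.ofConjDivSelf_coe, map_sub, Complex.conj_ofReal, ← hconj]
    ring
  refine ⟨p, ?_, fun t => ?_⟩
  · refine continuous_const.mul (Continuous.subtype_mk ?_ _)
    fun_prop (disch := exact fun t => sub_ne_zero.2 (hk_ne t))
  · rw [← circle_coe_ne_coe, ← Complex.ofReal_inj, coe_circleCrossRatio, coe_p]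
    exact ⟨mul_sub_mul_div_sub_ne hbd' hcd' hk (hk_ne t),
      crossRatio_mul_sub_mul_div_sub hbc' hbd' hcd' hk (hk_ne t)⟩

end Circle

section Linking

variable {V : Type*} {f : V → Circle} {a b c d : V}

theorem nonSplitLink_of_circleCrossRatio_neg
    (h : circleCrossRatio (f a) (f b) (f c) (f d) < 0) : NonSplitLink f a b c d := by
  obtain ⟨⟨hac, hbd⟩, had, hbc⟩ := circleCrossRatio_ne_zero.1 h.ne
  intro heq
  set C := connectedComponentIn ({f c, f d}ᶜ : Set Circle) (f a)
  have ha : f a ∈ C := mem_connectedComponentIn (by simp [hac, had])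
  have hb : f b ∈ C := heq ▸ mem_connectedComponentIn (by simp [hbc, hbd])
  have hne_c {x : Circle} (hx : x ∈ C) : x ≠ f c :=
    fun hxc => connectedComponentIn_subset _ _ hx (.inl hxc)
  have hne_d {x : Circle} (hx : x ∈ C) : x ≠ f d :=
    fun hxd => connectedComponentIn_subset _ _ hx (.inr hxd)
  obtain ⟨x, hx, hx0⟩ := isPreconnected_connectedComponentIn.intermediate_value ha hb
    ((continuousOn_circleCrossRatio_left hbc).mono fun _ => hne_d)
    ⟨h.le, (circleCrossRatio_self_left hbc hbd).symm ▸ zero_le_one⟩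
  exact circleCrossRatio_ne_zero.2 ⟨⟨hne_c hx, hbd⟩, hne_d hx, hbc⟩ hx0

theorem not_nonSplitLink_of_circleCrossRatio_pos (hcd : f c ≠ f d)
    (h : 0 < circleCrossRatio (f a) (f b) (f c) (f d)) : ¬NonSplitLink f a b c d := by
  obtain ⟨⟨-, hbd⟩, had, hbc⟩ := circleCrossRatio_ne_zero.1 h.ne'
  obtain ⟨p, hp_cont, hp⟩ := exists_continuous_circleCrossRatio_eq hbc hbd hcd
  have p_eq {x : Circle} (hx : x ≠ f d) : p (circleCrossRatio x (f b) (f c) (f d)) = x :=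
    circleCrossRatio_left_injOn hbc hbd hcd (hp _).1 hx (hp _).2
  have hpb : p 1 = f b := circleCrossRatio_self_left hbc hbd ▸ p_eq hbd
  have hsub : p '' Set.Ioi 0 ⊆ {f c, f d}ᶜ := by
    rintro _ ⟨t, ht, rfl⟩
    have hpc : p t ≠ f c := (circleCrossRatio_ne_zero.1 ((hp t).2.trans_ne ht.ne')).1.1
    exact not_or.2 ⟨hpc, (hp t).1⟩
  exact not_not.2 <| connectedComponentIn_eq <|
    (isPreconnected_Ioi.image p hp_cont.continuousOn).subset_connectedComponentIn
      ⟨_, h, p_eq had⟩ hsub ⟨1, Set.mem_Ioi.2 one_pos, hpb⟩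

theorem NonSplitLink.symm (hac : f a ≠ f c) (had : f a ≠ f d) (hbc : f b ≠ f c)
    (hbd : f b ≠ f d) (hcd : f c ≠ f d) (h : NonSplitLink f a b c d) : NonSplitLink f c d a b := by
  rcases (circleCrossRatio_ne_zero.2 ⟨⟨hac, hbd⟩, had, hbc⟩).lt_or_gt with hneg | hpos
  · exact nonSplitLink_of_circleCrossRatio_neg (circleCrossRatio_swap (f a) _ _ _ ▸ hneg)
  · exact absurd h (not_nonSplitLink_of_circleCrossRatio_pos hcd hpos)

end Linking

section Graph

variable {V : Type*} {G : SimpleGraph V} {S T : Set V}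

lemma exists_adj_ne_of_reachable {Y : Type*} {g : V → Y} {x y : V} (hxy : G.Reachable x y)
    (hg : g x ≠ g y) : ∃ a b, G.Adj a b ∧ g a ≠ g b := by
  obtain ⟨p⟩ := hxy
  obtain ⟨e, -, hfst, hsnd⟩ := p.exists_boundary_dart {v | g v = g x} rfl hg.symm
  exact ⟨e.fst, e.snd, e.adj, fun h => hsnd (h.symm.trans hfst)⟩

lemma NonSplitLink.exists_adj {f : V → Circle} {a b c d : V}
    (hS : (G.induce S).Preconnected) (ha : a ∈ S) (hb : b ∈ S) (h : NonSplitLink f a b c d) :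
    ∃ a' ∈ S, ∃ b' ∈ S, G.Adj a' b' ∧ NonSplitLink f a' b' c d := by
  obtain ⟨a', b', hadj, hne⟩ := exists_adj_ne_of_reachable
    (g := fun v : S => connectedComponentIn ({f c, f d}ᶜ : Set Circle) (f v))
    (hS ⟨a, ha⟩ ⟨b, hb⟩) h
  exact ⟨a', a'.2, b', b'.2, hadj, hne⟩

lemma NonSplitLink.exists_adj_adj {f : V → Circle} (hf : Function.Injective f) {a b c d : V}
    (hS : (G.induce S).Preconnected) (hT : (G.induce T).Preconnected) (hST : Disjoint S T)
    (ha : a ∈ S) (hb : b ∈ S) (hc : c ∈ T) (hd : d ∈ T) (hcd : c ≠ d)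
    (h : NonSplitLink f a b c d) :
    ∃ a' ∈ S, ∃ b' ∈ S, ∃ c' ∈ T, ∃ d' ∈ T,
      G.Adj a' b' ∧ G.Adj c' d' ∧ NonSplitLink f c' d' a' b' := by
  have hne {x y : V} (hx : x ∈ S) (hy : y ∈ T) : f x ≠ f y := hf.ne (hST.ne_of_mem hx hy)
  obtain ⟨a', ha', b', hb', hab, hlink⟩ := h.exists_adj hS ha hb
  obtain ⟨c', hc', d', hd', hcd', hlink'⟩ := (hlink.symm (hne ha' hc) (hne ha' hd)
    (hne hb' hc) (hne hb' hd) (hf.ne hcd)).exists_adj hT hc hd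
  exact ⟨a', ha', b', hb', c', hc', d', hd', hab, hcd', hlink'⟩

end Graph

lemma disjoint_biUnion_of_disjoint {ι α : Type*} {B : ι → Set α}
    (hB : Pairwise fun i j => Disjoint (B i) (B j)) {s t : Set ι} (hst : Disjoint s t) :
    Disjoint (⋃ i ∈ s, B i) (⋃ i ∈ t, B i) := by
  simp only [Set.disjoint_iUnion₂_left, Set.disjoint_iUnion₂_right]
  exact fun i hi j hj => hB (hst.ne_of_mem hj hi)

theorem minor_preserves_intrinsic_S1_linking
    {W V : Type*} (H : SimpleGraph W) (G : SimpleGraph V)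
    (hminor : IsMinor H G) (hH : IntrinsicallyS1Linked H) :
    IntrinsicallyS1Linked G := by
  obtain ⟨B, hne, hdisj, hconn, hadj⟩ := hminor
  intro f hf
  choose r hr using hne
  have hr_inj : Function.Injective r := fun x y hxy =>
    hdisj.eq (Set.not_disjoint_iff.2 ⟨r x, hr x, hxy ▸ hr y⟩)
  obtain ⟨h, h', k, k', hh, hk, hhk, hlink⟩ := hH (f ∘ r) (hf.comp hr_inj)
  have hpre {x y : W} (hxy : H.Adj x y) : (G.induce (B x ∪ B y)).Preconnected := by
    obtain ⟨u, hu, v, hv, huv⟩ := hadj x y hxy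
    exact (SimpleGraph.connected_induce_union (hconn x).preconnected (hconn y).preconnected
      hu hv huv).preconnected
  have hST : Disjoint (B h ∪ B h') (B k ∪ B k') := by
    simpa only [Set.biUnion_pair] using
      disjoint_biUnion_of_disjoint hdisj (Set.disjoint_iff_inter_eq_empty.2 hhk)
  obtain ⟨a, ha, b, hb, c, hc, d, hd, hab, hcd, hlink'⟩ :=
    NonSplitLink.exists_adj_adj hf (hpre hh) (hpre hk) hST (.inl (hr h)) (.inr (hr h'))
      (.inl (hr k)) (.inr (hr k')) (hr_inj.ne hk.ne) hlink
  exact ⟨c, d, a, b, hcd, hab, Set.disjoint_iff_inter_eq_empty.1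
    (hST.symm.mono (Set.pair_subset hc hd) (Set.pair_subset ha hb)), hlink'⟩
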